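/- Let B^n be the closed unit ball in ℝ^n and f : B^n → ℝ^n a continuous map such that for every x on the boundary sphere with f(x) ≠ 0, we have x ≠ f(x)/‖f(x)‖. Then f has a zero in B^n. -/

import Mathlib

open MeasureTheory Metric Set

namespace Brw

lemma det_poly {n : ℕ} (A : EuclideanSpace ℝ (Fin n) →L[ℝ] EuclideanSpace ℝ (Fin n)) :
    ∃ p : Polynomial ℝ, p.natDegree ≤ n ∧ ∀ t : ℝ,
      p.eval t = (ContinuousLinearMap.id ℝ _ + t • A).det := by
  let b := (EuclideanSpace.basisFun (Fin n) ℝ).toBasis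
  let M := LinearMap.toMatrix b b (A : EuclideanSpace ℝ (Fin n) →ₗ[ℝ] EuclideanSpace ℝ (Fin n))
  refine ⟨Matrix.det ((Polynomial.X : Polynomial ℝ) • M.map Polynomial.C +
    (1 : Matrix (Fin n) (Fin n) ℝ).map Polynomial.C), ?_, fun t => ?_⟩
  · simpa using Polynomial.natDegree_det_X_add_C_le M 1
  · rw [← Polynomial.coe_evalRingHom, RingHom.map_det]
    have h1 : LinearMap.toMatrix b b ((ContinuousLinearMap.id ℝ _ + t • A :
        EuclideanSpace ℝ (Fin n) →L[ℝ] EuclideanSpace ℝ (Fin n)) :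
        EuclideanSpace ℝ (Fin n) →ₗ[ℝ] EuclideanSpace ℝ (Fin n)) = t • M + 1 := by
      simp [M, add_comm]
    rw [ContinuousLinearMap.det, ← LinearMap.det_toMatrix b, h1]
    congr 1
    ext i j
    by_cases hij : i = j
    · simp [Matrix.map_apply, Matrix.one_apply, hij]
      try ring
    · simp [Matrix.map_apply, Matrix.one_apply, hij]
      try ring

lemma det_pos {n : ℕ} : ∃ δ : ℝ, 0 < δ ∧
    ∀ A : EuclideanSpace ℝ (Fin n) →L[ℝ] EuclideanSpace ℝ (Fin n), ‖A‖ < δ →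
      0 < (ContinuousLinearMap.id ℝ _ + A).det := by
  have hc : Continuous fun A : EuclideanSpace ℝ (Fin n) →L[ℝ] EuclideanSpace ℝ (Fin n) =>
      (ContinuousLinearMap.id ℝ _ + A).det :=
    ContinuousLinearMap.continuous_det.comp (continuous_const.add continuous_id)
  have h0 : 0 < (ContinuousLinearMap.id ℝ (EuclideanSpace ℝ (Fin n)) + 0).det := by
    simp [ContinuousLinearMap.det]
  obtain ⟨δ, hδ, h⟩ := Metric.eventually_nhds_iff.1 (hc.continuousAt.eventually (lt_mem_nhds h0))
  exact ⟨δ, hδ, fun A hA => h (by simpa [dist_eq_norm] using hA)⟩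

lemma small {n : ℕ} {R : ℝ} {K : NNReal}
    {φ : EuclideanSpace ℝ (Fin n) → EuclideanSpace ℝ (Fin n)} (hφ : LipschitzWith K φ)
    (h0 : ∀ x, R ≤ ‖x‖ → φ x = 0) (hd : ∀ x, ‖x‖ < R → DifferentiableAt ℝ φ x)
    {δ : ℝ} (hδ : ∀ A : EuclideanSpace ℝ (Fin n) →L[ℝ] EuclideanSpace ℝ (Fin n), ‖A‖ < δ →
      0 < (ContinuousLinearMap.id ℝ _ + A).det) {t : ℝ} (ht0 : 0 ≤ t) (ht1 : t * K < 1)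
    (ht : t * K < δ) :
    IntegrableOn (fun x => (ContinuousLinearMap.id ℝ _ + t • fderiv ℝ φ x).det) (ball 0 R) ∧
    ∫ x in ball 0 R, (ContinuousLinearMap.id ℝ _ + t • fderiv ℝ φ x).det =
      volume.real (ball (0 : EuclideanSpace ℝ (Fin n)) R) := by
  set G : EuclideanSpace ℝ (Fin n) → EuclideanSpace ℝ (Fin n) := fun x => x + t • φ x with hG
  have hnn : ∀ x y, ‖t • φ x - t • φ y‖ ≤ t * K * ‖x - y‖ := fun x y => by
    rw [← smul_sub, norm_smul, Real.norm_of_nonneg ht0, mul_assoc]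
    gcongr
    exact hφ.norm_sub_le x y
  have happ : ApproximatesLinearOn G ((ContinuousLinearEquiv.refl ℝ (EuclideanSpace ℝ (Fin n)) :
      EuclideanSpace ℝ (Fin n) ≃L[ℝ] EuclideanSpace ℝ (Fin n)) :
      EuclideanSpace ℝ (Fin n) →L[ℝ] EuclideanSpace ℝ (Fin n)) univ (Real.toNNReal t * K) := by
    intro x _ y _
    have : G x - G y - (x - y) = t • φ x - t • φ y := by simp only [hG]; abel
    simpa [this, ht0] using hnn x y
  have hc : Subsingleton (EuclideanSpace ℝ (Fin n)) ∨ Real.toNNReal t * K <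
      ‖((ContinuousLinearEquiv.refl ℝ (EuclideanSpace ℝ (Fin n))).symm :
      EuclideanSpace ℝ (Fin n) →L[ℝ] EuclideanSpace ℝ (Fin n))‖₊⁻¹ := by
    rcases subsingleton_or_nontrivial (EuclideanSpace ℝ (Fin n)) with h | h
    · exact Or.inl h
    · right
      have : ‖((ContinuousLinearEquiv.refl ℝ (EuclideanSpace ℝ (Fin n))).symm :
        EuclideanSpace ℝ (Fin n) →L[ℝ] EuclideanSpace ℝ (Fin n))‖₊ = 1 := by
        ext; exact ContinuousLinearMap.norm_id
      rw [this, inv_one, ← NNReal.coe_lt_coe]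
      simpa [ht0] using ht1
  have hinj : Function.Injective G := injOn_univ.1 (happ.injOn hc)
  have hsurj : Function.Surjective G := happ.surjective hc
  have hid : ∀ x, R ≤ ‖x‖ → G x = x := fun x hx => by simp [hG, h0 x hx]
  have him : G '' ball 0 R = ball 0 R := by
    ext y
    simp only [mem_image, mem_ball_zero_iff]
    constructor
    · rintro ⟨x, hx, rfl⟩
      by_contra hy
      push Not at hy
      have := hinj (hid _ hy)
      rw [this] at hy
      linarith
    · intro hy
      obtain ⟨x, rfl⟩ := hsurj y
      refine ⟨x, ?_, rfl⟩
      by_contra hx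
      push Not at hx
      rw [hid x hx] at hy
      linarith
  have hder : ∀ x ∈ ball (0 : EuclideanSpace ℝ (Fin n)) R, HasFDerivWithinAt G
      (ContinuousLinearMap.id ℝ _ + t • fderiv ℝ φ x) (ball 0 R) x := fun x hx =>
    ((hasFDerivAt_id x).add
      ((hd x (by simpa using hx)).hasFDerivAt.const_smul t)).hasFDerivWithinAt
  have hpos : ∀ x, 0 < (ContinuousLinearMap.id ℝ _ + t • fderiv ℝ φ x).det := fun x => by
    apply hδ
    rw [norm_smul, Real.norm_of_nonneg ht0]
    refine lt_of_le_of_lt ?_ ht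
    gcongr
    exact norm_fderiv_le_of_lipschitz ℝ hφ
  have hfin : volume (ball (0 : EuclideanSpace ℝ (Fin n)) R) ≠ ⊤ := measure_ball_lt_top.ne
  have h1 := integral_image_eq_integral_abs_det_fderiv_smul volume measurableSet_ball hder
    hinj.injOn (fun _ => (1 : ℝ))
  have h2 := (integrableOn_image_iff_integrableOn_abs_det_fderiv_smul volume measurableSet_ball hder
    hinj.injOn (fun _ => (1 : ℝ))).1 (by rw [him]; exact integrableOn_const hfin)
  simp only [abs_of_pos (hpos _), smul_eq_mul, mul_one] at h1 h2
  refine ⟨h2, ?_⟩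
  rw [← h1, him]
  simp

lemma full {n : ℕ} {R : ℝ} {K : NNReal}
    {φ : EuclideanSpace ℝ (Fin n) → EuclideanSpace ℝ (Fin n)} (hφ : LipschitzWith K φ)
    (h0 : ∀ x, R ≤ ‖x‖ → φ x = 0) (hd : ∀ x, ‖x‖ < R → DifferentiableAt ℝ φ x) :
    ∫ x in ball 0 R, (ContinuousLinearMap.id ℝ _ + fderiv ℝ φ x).det =
      volume.real (ball (0 : EuclideanSpace ℝ (Fin n)) R) := by
  obtain ⟨δ, hδ0, hδ⟩ := det_pos (n := n)
  obtain ⟨τ, hτ0, hτ⟩ : ∃ τ : ℝ, 0 < τ ∧ ∀ s, 0 ≤ s → s ≤ τ → s * K < 1 ∧ s * K < δ := by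
    refine ⟨min 1 δ / (2 * (K + 1)), by positivity, fun s hs hs' => ?_⟩
    have hm : 0 < min 1 δ := by positivity
    have : s * K < min 1 δ := by
      have hK := K.coe_nonneg
      rw [le_div_iff₀ (by positivity)] at hs'
      nlinarith
    exact lt_min_iff.1 this
  let v : ℕ → ℝ := fun i => τ / (i + 1)
  have hv : Set.InjOn v (Finset.range (n + 1)) := by
    intro i _ j _ h
    have h : τ / ((i : ℝ) + 1) = τ / ((j : ℝ) + 1) := h
    rw [div_eq_div_iff (by positivity) (by positivity)] at h
    have := mul_left_cancel₀ hτ0.ne' h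
    have : (j : ℝ) = i := by linarith
    exact_mod_cast this.symm
  have hvs : ∀ i, 0 ≤ v i ∧ v i ≤ τ := fun i =>
    ⟨by positivity, div_le_self hτ0.le (by simp)⟩
  have key := fun i => small hφ h0 hd hδ (hvs i).1 (hτ _ (hvs i).1 (hvs i).2).1
    (hτ _ (hvs i).1 (hvs i).2).2
  let c : ℕ → ℝ := fun i => (Lagrange.basis (Finset.range (n + 1)) v i).eval 1
  have hcs : ∑ i ∈ Finset.range (n + 1), c i = 1 := by
    have := congrArg (Polynomial.eval 1) (Lagrange.sum_basis hv (by simp))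
    simpa [Polynomial.eval_finsetSum] using this
  have hpt : ∀ x, (ContinuousLinearMap.id ℝ _ + fderiv ℝ φ x).det =
      ∑ i ∈ Finset.range (n + 1),
        c i * (ContinuousLinearMap.id ℝ _ + v i • fderiv ℝ φ x).det := by
    intro x
    obtain ⟨p, hp, hpe⟩ := det_poly (fderiv ℝ φ x)
    have h1 : p.degree < (Finset.range (n + 1)).card := by
      refine lt_of_le_of_lt Polynomial.degree_le_natDegree ?_
      rw [Finset.card_range]
      exact_mod_cast Nat.lt_succ_of_le hp
    have := congrArg (Polynomial.eval 1) (Lagrange.eq_interpolate hv h1)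
    rw [hpe, one_smul] at this
    rw [this, Lagrange.interpolate_apply, Polynomial.eval_finsetSum]
    refine Finset.sum_congr rfl fun i _ => ?_
    rw [Polynomial.eval_mul, Polynomial.eval_C, hpe, mul_comm]
  simp_rw [hpt]
  rw [integral_finsetSum _ fun i _ => ((key i).1.const_mul (c i))]
  simp_rw [integral_const_mul, (key _).2]
  rw [← Finset.sum_mul, hcs, one_mul]

lemma no_retract {n : ℕ} (N : EuclideanSpace ℝ (Fin n) → EuclideanSpace ℝ (Fin n))
    (hN : ContDiff ℝ 1 N) (h2 : ∀ x, ‖N x‖ = 2) (hb : ∀ x, ‖x‖ = 2 → N x = x) : False := by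
  classical
  set Ψ : EuclideanSpace ℝ (Fin n) → EuclideanSpace ℝ (Fin n) := fun x => N x - x with hΨ
  have hΨc : ContDiff ℝ 1 Ψ := hN.sub contDiff_id
  obtain ⟨C, hC⟩ := (isCompact_closedBall (0 : EuclideanSpace ℝ (Fin n)) 2).exists_bound_of_continuousOn
    (hΨc.continuous_fderiv (by norm_num)).continuousOn
  have hC0 : 0 ≤ C := (norm_nonneg _).trans (hC 0 (by simp))
  have hL : ∀ x y, ‖x‖ ≤ 2 → ‖y‖ ≤ 2 → ‖Ψ x - Ψ y‖ ≤ C * ‖x - y‖ := fun x y hx hy =>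
    (convex_closedBall (0 : EuclideanSpace ℝ (Fin n)) 2).norm_image_sub_le_of_norm_fderiv_le
      (fun z _ => (hΨc.differentiable (by norm_num)) z) hC (by simpa using hy) (by simpa using hx)
  set φ : EuclideanSpace ℝ (Fin n) → EuclideanSpace ℝ (Fin n) :=
    fun x => if ‖x‖ < 2 then Ψ x else 0 with hφ
  have hin : ∀ x, ‖x‖ < 2 → φ x = Ψ x := fun x hx => by simp [hφ, hx]
  have hout : ∀ x, 2 ≤ ‖x‖ → φ x = 0 := fun x hx => by simp [hφ, not_lt.2 hx]
  have hmix : ∀ x y, ‖x‖ < 2 → 2 ≤ ‖y‖ → ‖φ x - φ y‖ ≤ 2 * C * ‖x - y‖ := by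
    intro x y hx hy
    have hy0 : 0 < ‖y‖ := by linarith
    have hz : ‖(2 / ‖y‖) • y‖ = 2 := by
      rw [norm_smul, Real.norm_of_nonneg (by positivity)]; field_simp
    have h3 : Ψ ((2 / ‖y‖) • y) = 0 := by simp [hΨ, hb _ hz]
    have h4 := hL x ((2 / ‖y‖) • y) hx.le hz.le
    rw [h3] at h4
    rw [hin x hx, hout y hy]
    refine h4.trans ?_
    have h5 : ‖y - (2 / ‖y‖) • y‖ = ‖y‖ - 2 := by
      have : y - (2 / ‖y‖) • y = (1 - 2 / ‖y‖) • y := by rw [sub_smul, one_smul]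
      rw [this, norm_smul, Real.norm_of_nonneg]
      · field_simp
      · rw [sub_nonneg, div_le_one hy0]; exact hy
    have h6 : ‖x - (2 / ‖y‖) • y‖ ≤ ‖x - y‖ + ‖y - (2 / ‖y‖) • y‖ := norm_sub_le_norm_sub_add_norm_sub _ _ _
    have h7 : ‖y‖ - ‖x‖ ≤ ‖x - y‖ := by rw [norm_sub_rev]; exact norm_sub_norm_le y x
    nlinarith
  have hlip : LipschitzWith (Real.toNNReal (2 * C)) φ := by
    refine LipschitzWith.of_dist_le_mul fun x y => ?_
    rw [dist_eq_norm, dist_eq_norm, Real.coe_toNNReal _ (by positivity)]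
    rcases lt_or_ge ‖x‖ 2 with hx | hx <;> rcases lt_or_ge ‖y‖ 2 with hy | hy
    · rw [hin x hx, hin y hy]
      refine (hL x y hx.le hy.le).trans ?_
      nlinarith [norm_nonneg (x - y), mul_nonneg hC0 (norm_nonneg (x - y))]
    · exact hmix x y hx hy
    · rw [norm_sub_rev, norm_sub_rev x]; exact hmix y x hy hx
    · rw [hout x hx, hout y hy]; simp; positivity
  have hev : ∀ x, ‖x‖ < 2 → φ =ᶠ[nhds x] Ψ := fun x hx => by
    filter_upwards [(isOpen_lt continuous_norm continuous_const).mem_nhds hx] with z hz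
    exact hin z hz
  have hNd : Differentiable ℝ N := hN.differentiable (by norm_num)
  have hfull := full hlip hout (fun x hx =>
    ((hΨc.differentiable (by norm_num)) x).congr_of_eventuallyEq (hev x hx))
  have hz : ∫ x in ball (0 : EuclideanSpace ℝ (Fin n)) 2,
      (ContinuousLinearMap.id ℝ _ + fderiv ℝ φ x).det = 0 := by
    refine setIntegral_eq_zero_of_forall_eq_zero fun x hx => ?_
    have hx : ‖x‖ < 2 := by simpa using hx
    have h8 : fderiv ℝ φ x = fderiv ℝ N x - ContinuousLinearMap.id ℝ _ := by
      rw [(hev x hx).fderiv_eq]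
      exact ((hNd x).hasFDerivAt.sub (hasFDerivAt_id x)).fderiv
    rw [h8, add_sub_cancel]
    by_contra hne
    have hsurj : Function.Surjective (fderiv ℝ N x) := by
      have hu : IsUnit (LinearMap.det (fderiv ℝ N x : EuclideanSpace ℝ (Fin n) →ₗ[ℝ] EuclideanSpace ℝ (Fin n))) :=
        isUnit_iff_ne_zero.2 hne
      exact ((Module.End.isUnit_iff _).1 ((LinearMap.isUnit_iff_isUnit_det _).2 hu)).2
    obtain ⟨w, hw⟩ := hsurj (N x)
    have h9 : HasFDerivAt (fun y => ‖N y‖ ^ 2) _ x := (hNd x).hasFDerivAt.norm_sq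
    have h10 : HasFDerivAt (fun y => ‖N y‖ ^ 2) (0 : EuclideanSpace ℝ (Fin n) →L[ℝ] ℝ) x := by
      simp only [h2]; exact hasFDerivAt_const _ _
    have h11 := congrArg (fun T => T w) (h9.unique h10)
    simp [hw, h2] at h11
  rw [hz] at hfull
  have : 0 < volume.real (ball (0 : EuclideanSpace ℝ (Fin n)) 2) :=
    ENNReal.toReal_pos (measure_ball_pos volume _ (by norm_num)).ne' measure_ball_lt_top.ne
  linarith

end Brw
open Brw

theorem stmt0 (n : ℕ) (f : EuclideanSpace ℝ (Fin n) → EuclideanSpace ℝ (Fin n))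
    (hf : ContinuousOn f (Metric.closedBall 0 1))
    (hbd : ∀ x : EuclideanSpace ℝ (Fin n), ‖x‖ = 1 → f x ≠ 0 → x ≠ ‖f x‖⁻¹ • f x) :
    ∃ x ∈ Metric.closedBall (0 : EuclideanSpace ℝ (Fin n)) 1, f x = 0 := by
  by_contra hcon
  push Not at hcon
  let P : EuclideanSpace ℝ (Fin n) → EuclideanSpace ℝ (Fin n) := fun x => (max 1 ‖x‖)⁻¹ • x
  have hm : ∀ x : EuclideanSpace ℝ (Fin n), 0 < max 1 ‖x‖ := fun x => by positivity
  have hPc : Continuous P :=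
    ((continuous_const.max continuous_norm).inv₀ fun x => (hm x).ne').smul continuous_id
  have hPb : ∀ x, P x ∈ closedBall (0 : EuclideanSpace ℝ (Fin n)) 1 := fun x => by
    rw [mem_closedBall_zero_iff, norm_smul, Real.norm_of_nonneg (by positivity),
      inv_mul_le_iff₀ (hm x)]
    simp
  have hfP : Continuous fun x => f (P x) := hf.comp_continuous hPc hPb
  let a : EuclideanSpace ℝ (Fin n) → ℝ := fun x => max 0 (min 1 (2 - ‖x‖))
  have hac : Continuous a := by fun_prop
  let u : EuclideanSpace ℝ (Fin n) → EuclideanSpace ℝ (Fin n) := fun x => -(a x • (f (P x) + x))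
  have huc : Continuous u := (hac.smul (hfP.add continuous_id)).neg
  have hu0 : ∀ x, 2 ≤ ‖x‖ → u x = 0 := fun x hx => by
    have : a x = 0 := max_eq_left ((min_le_right _ _).trans (by linarith))
    simp [u, this]
  have hne : ∀ x, x + u x ≠ 0 := by
    intro x hx
    have hx' : a x • f (P x) = (1 - a x) • x := by
      have : x - a x • (f (P x) + x) = 0 := by simpa [u, sub_eq_add_neg] using hx
      rw [sub_smul, one_smul]
      rw [smul_add, sub_eq_zero] at this
      rw [eq_sub_iff_add_eq]; exact this.symm
    have hfne := hcon _ (hPb x)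
    rcases le_or_gt ‖x‖ 1 with h1 | h1
    · have : a x = 1 := by
        simp only [a]; rw [min_eq_left (by linarith)]; simp
      rw [this] at hx'
      simp [hfne] at hx'
    · rcases le_or_gt 2 ‖x‖ with h2 | h2
      · have : x = 0 := by simpa [hu0 x h2] using hx
        rw [this] at h2; simp at h2; linarith
      · have hax : a x = 2 - ‖x‖ := by
          simp only [a]; rw [min_eq_right (by linarith), max_eq_right (by linarith)]
        have ha0 : 0 < a x := by rw [hax]; linarith
        have ha1 : 0 < 1 - a x := by rw [hax]; linarith
        have hPx : P x = ‖x‖⁻¹ • x := by simp only [P]; rw [max_eq_right h1.le]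
        have hx0 : 0 < ‖x‖ := by linarith
        have hfx : f (P x) = ((a x)⁻¹ * (1 - a x)) • x := by
          rw [mul_smul, ← hx', smul_smul, inv_mul_cancel₀ ha0.ne', one_smul]
        have hn : ‖P x‖ = 1 := by
          rw [hPx, norm_smul, norm_inv, norm_norm, inv_mul_cancel₀ hx0.ne']
        refine hbd _ hn hfne ?_
        have hk : 0 < (a x)⁻¹ * (1 - a x) := by positivity
        rw [hfx, norm_smul, Real.norm_of_nonneg hk.le, smul_smul, hPx]
        congr 1
        field_simp
  obtain ⟨g, hg, hgu, hgs⟩ := huc.exists_contDiff_approx 1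
    (ε := fun x => ‖x + u x‖) (by fun_prop) (fun x => norm_pos_iff.2 (hne x))
  have hF : ∀ x, x + g x ≠ 0 := by
    intro x hx
    have := hgu x
    rw [dist_eq_norm, eq_neg_of_add_eq_zero_right hx] at this
    rw [← norm_neg] at this
    simp [sub_eq_add_neg, add_comm] at this
  have hg0 : ∀ x, 2 ≤ ‖x‖ → g x = 0 := fun x hx => by
    by_contra h
    exact hgs h (hu0 x hx)
  have hFc : ContDiff ℝ 1 fun x => x + g x := contDiff_id.add hg
  refine no_retract (fun x => (2 * ‖x + g x‖⁻¹) • (x + g x)) ?_ ?_ ?_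
  · exact (contDiff_const.mul ((hFc.norm ℝ hF).inv fun x => norm_ne_zero_iff.2 (hF x))).smul hFc
  · intro x
    have := norm_pos_iff.2 (hF x)
    rw [norm_smul, Real.norm_of_nonneg (by positivity)]
    field_simp
  · intro x hx
    simp [hg0 x hx.ge, hx]
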